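/- arXiv:2206.14959 — 3 statements merged into one kernel-verified Lean document; each statement's English description precedes it below -/
import Mathlib

section
/- Let G be a closed subgroup of GL₂(ℤ_ℓ) for a prime ℓ ≥ 5 such that det(G) = ℤ_ℓ^× and the reduction of G modulo ℓ equals GL₂(ℤ/ℓℤ). Then G = GL₂(ℤ_ℓ). -/
open Matrix

/-!
The commutator subgroup `H` of `G` reduces onto the commutator subgroup of the general linear group
of the residue field, which is the special linear group; since `G` has full determinant, it suffices
that the closure of `H` contains every matrix of determinant one.

This is Serre's successive approximation modulo `p ^ n`. If `h = 1 + p ^ n x + O(p ^ (n + 1))` with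
`n ≥ 1`, then `h ^ p = 1 + p ^ (n + 1) x + O(p ^ (n + 2))`, so once every trace-zero `x` occurs as a
leading term at one level it occurs at all higher levels, and determinant-one matrices can be
corrected one power of `p` at a time. For the first level, the same `p`-th power computation works
for `h = 1 + x + O(p)` as soon as `x ^ 2 = 0` and `p ≥ 5`; the matrices of square zero `v wᵀ` with
`wᵀ v = 0` span the trace-zero matrices additively.
-/

open Filter Topology
open scoped commutatorElement nonZeroDivisors

section Commutator

theorem mem_commutator_of_mul_eq {Γ : Type*} [Group Γ] {x y z : Γ} (h : x * y = z * (y * x)) :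
    z ∈ commutator Γ := by
  have hz : z = ⁅x, y⁆ := by rw [commutatorElement_def, h]; group
  exact hz ▸ Subgroup.commutator_mem_commutator (Subgroup.mem_top x) (Subgroup.mem_top y)

variable {ι K : Type*} [Fintype ι] [DecidableEq ι]

/-- The invertible diagonal matrix with entry `a` at `i` and all other diagonal entries `1`. Its
commutators with transvections and swaps generate the special linear group of a field. -/
def diagonalMulSingle [CommRing K] (i : ι) (a : Kˣ) : GL ι K :=
  Units.map (diagonalRingHom ι K).toMonoidHom (MulEquiv.piUnits.symm (Pi.mulSingle i a))

theorem coe_diagonalMulSingle [CommRing K] (i : ι) (a : Kˣ) :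
    (diagonalMulSingle i a : Matrix ι ι K) = diagonal (Pi.mulSingle i (a : K)) :=
  congrArg diagonal <| funext <|
    Pi.apply_mulSingle (fun _ ↦ ((↑) : Kˣ → K)) (fun _ ↦ Units.val_one) i a

variable [Field K]

theorem toGL_transvection_mem_commutator {a : Kˣ} (ha : a ≠ 1) {i j : ι} (hij : i ≠ j) (b : K) :
    (SpecialLinearGroup.transvection hij b).toGL ∈ commutator (GL ι K) := by
  -- Conjugation by `D` scales the parameter of `T` by `a`, so `⁅D, T t⁆ = T ((a - 1) * t)`.
  let D := diagonalMulSingle i a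
  let T (t : K) := (SpecialLinearGroup.transvection hij t).toGL
  suffices D * T (b / ((a : K) - 1)) = T b * (T (b / ((a : K) - 1)) * D) from
    mem_commutator_of_mul_eq this
  have hb : b + b / ((a : K) - 1) = a * (b / ((a : K) - 1)) := by
    have := sub_ne_zero_of_ne (Units.val_eq_one.not.mpr ha)
    field_simp
    ring
  ext k l
  simp only [← mul_assoc, T, ← map_mul, ← SpecialLinearGroup.transvection_add, hb]
  simp only [D, coe_diagonalMulSingle, SpecialLinearGroup.transvection_coe, Units.val_mul,
    SpecialLinearGroup.coe_GL_coe_matrix, diagonal_mul, mul_diagonal, Matrix.add_apply]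
  grind [Matrix.one_apply]

theorem toGL_diag2n_mem_commutator {i j : ι} (hij : i ≠ j) {c : K} (hc : c ≠ 0) :
    (SpecialLinearGroup.diag2n hij c hc).toGL ∈ commutator (GL ι K) := by
  let D := diagonalMulSingle i (Units.mk0 c hc)
  suffices D * GeneralLinearGroup.swap K i j =
      (SpecialLinearGroup.diag2n hij c hc).toGL * (GeneralLinearGroup.swap K i j * D) from
    mem_commutator_of_mul_eq this
  ext k l
  simp only [D, coe_diagonalMulSingle, SpecialLinearGroup.diag2n_coe, Units.val_mul,
    SpecialLinearGroup.coe_GL_coe_matrix, GeneralLinearGroup.val_swap, Matrix.swap,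
    diagonal_mul, mul_diagonal, PEquiv.toMatrix_apply, Equiv.toPEquiv_apply]
  grind [Units.val_mk0]

theorem ker_det_le_commutator {a : Kˣ} (ha : a ≠ 1) :
    (GeneralLinearGroup.det : GL ι K →* Kˣ).ker ≤ commutator (GL ι K) := by
  intro g hg
  obtain ⟨s, rfl⟩ : g ∈ Set.range SpecialLinearGroup.toGL := by
    rwa [SpecialLinearGroup.range_toGL]
  cases subsingleton_or_nontrivial ι
  · rw [Subsingleton.elim s 1, map_one]
    exact one_mem _
  · exact SpecialLinearGroup.diagonal_transvection_induction'
      (fun s ↦ s.toGL ∈ commutator (GL ι K)) s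
      (fun _ _ hij _ hc ↦ toGL_diag2n_mem_commutator hij hc)
      (fun _ _ hij b ↦ toGL_transvection_mem_commutator ha hij b)
      (fun A B hA hB ↦ by simpa only [map_mul] using mul_mem hA hB)

end Commutator

section TraceZero

theorem vecMulVec_single_single {m n R : Type*} [DecidableEq m] [DecidableEq n] [MulZeroClass R]
    (i : m) (j : n) (a b : R) :
    vecMulVec (Pi.single i a) (Pi.single j b) = single i j (a * b) := by
  ext k l
  simp only [vecMulVec_apply, Pi.single_apply, single_apply]
  grind [mul_zero, zero_mul]

variable {ι R : Type*} [Fintype ι] [DecidableEq ι] [CommRing R]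

theorem vecMulVec_sq_eq_zero {v w : ι → R} (h : w ⬝ᵥ v = 0) : vecMulVec v w ^ 2 = 0 := by
  rw [sq, vecMulVec_mul_vecMulVec, h, zero_smul, vecMulVec_zero]

theorem det_one_add_vecMulVec (v w : ι → R) : (1 + vecMulVec v w).det = 1 + w ⬝ᵥ v := by
  rw [vecMulVec_eq Unit, det_one_add_replicateCol_mul_replicateRow]

theorem dvd_trace_of_det_one_add_smul_eq_one {r : R} (hr : r ∈ R⁰) {M : Matrix ι ι R}
    (h : (1 + r • M).det = 1) : r ∣ M.trace := by
  rw [det_one_add_smul, add_assoc, add_eq_left] at h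
  set q := ((1 + (Polynomial.X : Polynomial R) • M.map Polynomial.C).det).divX.divX.eval r
  have : r * (M.trace + q * r) = 0 := by linear_combination h
  exact ⟨-q, by linear_combination (mem_nonZeroDivisors_iff.mp hr).1 _ this⟩

variable (ι R) in
/-- The isotropic dyads `v wᵀ` with `wᵀ v = 0`, as a set of matrices: elements `N` of the trace-zero
Lie algebra with `N ^ 2 = 0` and `det (1 + N) = 1`, which span that Lie algebra additively. -/
def isotropicDyads : Set (Matrix ι ι R) := {N | ∃ v w : ι → R, w ⬝ᵥ v = 0 ∧ N = vecMulVec v w}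

theorem single_mem_closure_isotropicDyads {i j : ι} (hij : i ≠ j) (a : R) :
    single i j a ∈ AddSubmonoid.closure (isotropicDyads ι R) :=
  AddSubmonoid.subset_closure ⟨Pi.single i a, Pi.single j 1,
    by rw [single_dotProduct, Pi.single_eq_of_ne hij.symm, mul_zero],
    by rw [vecMulVec_single_single, mul_one]⟩

theorem single_sub_single_mem_closure_isotropicDyads (i j : ι) (a : R) :
    single i i a - single j j a ∈ AddSubmonoid.closure (isotropicDyads ι R) := by
  obtain rfl | hij := eq_or_ne i j
  · rw [sub_self]
    exact zero_mem _
  have hdyad : vecMulVec (Pi.single i a + Pi.single j a) (Pi.single i 1 - Pi.single j 1) ∈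
      AddSubmonoid.closure (isotropicDyads ι R) :=
    AddSubmonoid.subset_closure ⟨_, _, by simp [hij, hij.symm], rfl⟩
  convert! add_mem (add_mem hdyad (single_mem_closure_isotropicDyads hij a))
    (single_mem_closure_isotropicDyads hij.symm (-a)) using 1
  simp only [add_vecMulVec, vecMulVec_sub, vecMulVec_single_single, mul_one, ← single_neg]
  abel

theorem sub_single_trace_mem_closure_isotropicDyads (k : ι) (M : Matrix ι ι R) :
    M - single k k M.trace ∈ AddSubmonoid.closure (isotropicDyads ι R) := by
  induction M using Matrix.induction_on' with
  | h_zero => simp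
  | h_add M N hM hN =>
    rw [trace_add, single_add, add_sub_add_comm]
    exact add_mem hM hN
  | h_std_basis i j a =>
    obtain rfl | hij := eq_or_ne i j
    · rw [trace_single_eq_same]
      exact single_sub_single_mem_closure_isotropicDyads i k a
    · rw [trace_single_eq_of_ne i j a hij, single_zero, sub_zero]
      exact single_mem_closure_isotropicDyads hij a

end TraceZero

section LeadingTerms

theorem exists_one_add_pow_prime_eq {A : Type*} [Semiring A] {p : ℕ} (hp : p.Prime) (x : A) :
    ∃ s : A, (1 + x) ^ p = 1 + p * x + p * x ^ 2 * s + x ^ p := by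
  have hsum : ∑ k ∈ Finset.Ioo 0 p, x ^ (k - 1) * 1 ^ (p - k - 1) * ((p.choose k / p : ℕ) : A) =
      1 + x * ∑ k ∈ Finset.Ico 2 p, x ^ (k - 2) * ((p.choose k / p : ℕ) : A) := by
    rw [← Finset.Ico_add_one_left_eq_Ioo, zero_add, Finset.sum_eq_sum_Ico_succ_bot hp.one_lt,
      Finset.mul_sum]
    congr 1
    · simp [hp.pos]
    · refine Finset.sum_congr rfl fun k hk ↦ ?_
      rw [one_pow, mul_one, ← mul_assoc, ← pow_succ']
      congr 2
      have := Finset.mem_Ico.mp hk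
      omega
  refine ⟨∑ k ∈ Finset.Ico 2 p, x ^ (k - 2) * ((p.choose k / p : ℕ) : A), ?_⟩
  rw [add_comm, (Commute.one_right x).add_pow_prime_eq hp, hsum]
  simp only [one_pow, mul_one, mul_add, sq, mul_assoc]
  abel

variable {R A : Type*} [CommRing R] [Ring A] [Algebra R A]

theorem exists_one_add_pow_prime_eq_of_sq_eq {p : ℕ} (hp : p.Prime) (hp5 : 5 ≤ p)
    {k : ℕ} (hk : k ≠ 0) {x y : A} (hx : x ^ 2 = (p : R) ^ k • y) :
    ∃ c : A, (1 + x) ^ p = 1 + (p : R) • x + (p : R) ^ (k + 1) • c := by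
  obtain ⟨s, hs⟩ := exists_one_add_pow_prime_eq hp x
  obtain ⟨m, rfl⟩ := Nat.exists_eq_add_of_le' (Nat.le_of_succ_le hp5)
  obtain ⟨l, rfl⟩ := Nat.exists_eq_add_one_of_ne_zero hk
  set q := m + 4
  have hxq : x ^ q = (q : R) ^ (l + 1 + 1) • (q : R) ^ l • (x ^ m * y ^ 2) := by
    rw [show x ^ q = x ^ m * (x ^ 2) ^ 2 by rw [← pow_mul, ← pow_add], hx, smul_pow,
      mul_smul_comm, smul_smul]
    ring_nf
  refine ⟨y * s + (q : R) ^ l • (x ^ m * y ^ 2), ?_⟩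
  rw [hs, hxq, hx, ← map_natCast (algebraMap R A), ← Algebra.smul_def, ← Algebra.smul_def,
    smul_smul, ← pow_succ', smul_mul_assoc, smul_add, ← add_assoc]

/-- The leading terms `x` of the elements `1 + π ^ (n + 1) x + O(π ^ (n + 2))` of `H`: the preimage
in `A` of the graded piece of index `n + 1` of the `π`-adic congruence filtration of `H`. The
filtration starts at index `1` because congruence to `1` modulo `π ^ 0` is no condition. -/
def leadingTerms (π : R) (H : Subgroup Aˣ) (n : ℕ) : AddSubmonoid A where
  carrier := {x | ∃ h ∈ H, ∃ c : A, (h : A) = 1 + π ^ (n + 1) • (x + π • c)}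
  zero_mem' := ⟨1, one_mem H, 0, by simp⟩
  add_mem' := by
    rintro x y ⟨h, hh, c, hx⟩ ⟨k, hk, d, hy⟩
    refine ⟨h * k, mul_mem hh hk, c + d + π ^ n • ((x + π • c) * (y + π • d)), ?_⟩
    rw [Units.val_mul, hx, hy]
    simp only [mul_add, add_mul, smul_add, smul_mul_assoc, mul_smul_comm, mul_one, one_mul]
    module

theorem add_smul_mem_leadingTerms {π : R} {H : Subgroup Aˣ} {n : ℕ} {x : A}
    (hx : x ∈ leadingTerms π H n) (c : A) : x + π • c ∈ leadingTerms π H n := by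
  obtain ⟨h, hh, d, hd⟩ := hx
  exact ⟨h, hh, d - c, by rw [hd]; module⟩

theorem mem_leadingTerms_of_sq_eq {p : ℕ} (hp : p.Prime) (hp5 : 5 ≤ p) {H : Subgroup Aˣ} {n : ℕ}
    {h : Aˣ} (hh : h ∈ H) {x y : A} (hx : (h : A) = 1 + (p : R) ^ n • x)
    (hy : ((p : R) ^ n • x) ^ 2 = (p : R) ^ (n + 1) • y) : x ∈ leadingTerms (p : R) H n := by
  obtain ⟨c, hc⟩ := exists_one_add_pow_prime_eq_of_sq_eq hp hp5 n.add_one_ne_zero hy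
  exact ⟨h ^ p, pow_mem hh p, c, by rw [Units.val_pow_eq_pow_val, hx, hc]; module⟩

theorem mem_leadingTerms_zero_of_sq_eq_zero {p : ℕ} (hp : p.Prime) (hp5 : 5 ≤ p)
    {H : Subgroup Aˣ} {h : Aˣ} (hh : h ∈ H) {x c : A} (hx : x ^ 2 = 0)
    (hhx : (h : A) = 1 + x + (p : R) • c) : x ∈ leadingTerms (p : R) H 0 := by
  have hmem : x + (p : R) • c ∈ leadingTerms (p : R) H 0 := by
    refine mem_leadingTerms_of_sq_eq hp hp5 hh (y := x * c + c * x + (p : R) • c ^ 2) ?_ ?_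
    · rw [hhx]; module
    · rw [sq] at hx
      simp only [sq, pow_zero, one_smul, add_mul, mul_add, smul_mul_assoc, mul_smul_comm, hx]
      module
  simpa using add_smul_mem_leadingTerms hmem (-c)

theorem leadingTerms_le_succ {p : ℕ} (hp : p.Prime) (hp5 : 5 ≤ p) (H : Subgroup Aˣ) (n : ℕ) :
    leadingTerms (p : R) H n ≤ leadingTerms (p : R) H (n + 1) := by
  rintro x ⟨h, hh, c, hhx⟩
  have hmem : x + (p : R) • c ∈ leadingTerms (p : R) H (n + 1) :=
    mem_leadingTerms_of_sq_eq hp hp5 hh hhx (y := (p : R) ^ n • (x + (p : R) • c) ^ 2)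
      (by rw [smul_pow]; module)
  simpa using add_smul_mem_leadingTerms hmem (-c)

/-- The unit `g` is congruent to an element of `H` modulo `r`, i.e. `H` approximates `g` to
precision `r`. Congruence is taken in the algebra `A`, not in its unit group. -/
def MemModulo (H : Subgroup Aˣ) (r : R) (g : Aˣ) : Prop :=
  ∃ h ∈ H, ∃ c : A, (g : A) = h + r • c

theorem MemModulo.of_mul {H : Subgroup Aˣ} {r s : R} {g : Aˣ} (hg : MemModulo H (r * s) g) :
    MemModulo H r g := by
  obtain ⟨h, hh, c, hc⟩ := hg
  exact ⟨h, hh, s • c, by rw [hc, smul_smul]⟩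

theorem coe_inv_eq_add_smul {g h : Aˣ} {r : R} {c : A} (hc : (g : A) = h + r • c) :
    (↑h⁻¹ : A) = ↑g⁻¹ + r • (↑h⁻¹ * c * ↑g⁻¹) :=
  calc (↑h⁻¹ : A) = ↑h⁻¹ * g * ↑g⁻¹ := (Units.mul_inv_cancel_right _ g).symm
    _ = _ := by rw [hc, mul_add, add_mul, Units.inv_mul, one_mul, mul_smul_comm, smul_mul_assoc]

theorem memModulo_of_mem_leadingTerms {π : R} {H : Subgroup Aˣ} {n : ℕ} {h g : Aˣ} (hh : h ∈ H)
    {x : A} (hx : x ∈ leadingTerms π H n) (hg : (g : A) = h * (1 + π ^ (n + 1) • x)) :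
    MemModulo H (π ^ (n + 2)) g := by
  obtain ⟨k, hk, c, hkx⟩ := hx
  refine ⟨h * k, mul_mem hh hk, -(h * c), ?_⟩
  rw [hg, Units.val_mul, hkx]
  simp only [mul_add, mul_smul_comm, smul_add]
  module

end LeadingTerms

section Approximation

variable {ι R : Type*} [Fintype ι] [DecidableEq ι] [CommRing R] {p : ℕ} {H : Subgroup (GL ι R)}

theorem isotropicDyads_subset_leadingTerms_zero (hp : p.Prime) (hp5 : 5 ≤ p)
    (hmod : ∀ g : GL ι R, g.det = 1 → MemModulo H (p : R) g) :
    isotropicDyads ι R ⊆ leadingTerms (p : R) H 0 := by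
  rintro _ ⟨v, w, hvw, rfl⟩
  have hdet : (1 + vecMulVec v w).det = 1 := by rw [det_one_add_vecMulVec, hvw, add_zero]
  obtain ⟨h, hh, c, hc⟩ := hmod
    (GeneralLinearGroup.mk'' (1 + vecMulVec v w) (hdet ▸ isUnit_one)) (Units.ext hdet)
  refine mem_leadingTerms_zero_of_sq_eq_zero hp hp5 hh (vecMulVec_sq_eq_zero hvw) (c := -c) ?_
  rw [smul_neg, ← sub_eq_add_neg, eq_sub_iff_add_eq, ← hc]
  rfl

theorem mem_leadingTerms_of_dvd_trace (hp : p.Prime) (hp5 : 5 ≤ p)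
    (hmod : ∀ g : GL ι R, g.det = 1 → MemModulo H (p : R) g)
    {M : Matrix ι ι R} (hM : (p : R) ∣ M.trace) (n : ℕ) : M ∈ leadingTerms (p : R) H n := by
  induction n with
  | succ n ih => exact leadingTerms_le_succ hp hp5 H n ih
  | zero =>
    cases isEmpty_or_nonempty ι
    · rw [Subsingleton.elim M 0]
      exact zero_mem _
    · obtain ⟨t, ht⟩ := hM
      let k : ι := Classical.arbitrary ι
      have hmem := AddSubmonoid.closure_le.mpr
        (isotropicDyads_subset_leadingTerms_zero hp hp5 hmod)
        (sub_single_trace_mem_closure_isotropicDyads k M)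
      simpa [ht, ← smul_eq_mul, ← smul_single] using
        add_smul_mem_leadingTerms hmem (single k k t)

theorem memModulo_pow_of_det_eq_one (hp : p.Prime) (hp5 : 5 ≤ p) (hreg : (p : R) ∈ R⁰)
    (hH : ∀ h ∈ H, h.det = 1) (hmod : ∀ g : GL ι R, g.det = 1 → MemModulo H (p : R) g)
    {g : GL ι R} (hg : g.det = 1) (n : ℕ) : MemModulo H ((p : R) ^ n) g := by
  suffices MemModulo H ((p : R) ^ n * p) g from this.of_mul
  rw [← pow_succ]
  induction n with
  | zero => simpa only [zero_add, pow_one] using hmod g hg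
  | succ n ih =>
    obtain ⟨h, hh, c, hc⟩ := ih
    set C : Matrix ι ι R := (↑h⁻¹ : Matrix ι ι R) * c
    have hquot : (↑(h⁻¹ * g) : Matrix ι ι R) = 1 + (p : R) ^ (n + 1) • C := by
      rw [Units.val_mul, hc, mul_add, Units.inv_mul, mul_smul_comm]
    have hdet : (1 + (p : R) ^ (n + 1) • C).det = 1 := by
      rw [← hquot, ← GeneralLinearGroup.val_det_apply, map_mul, map_inv, hH h hh, hg]
      simp
    have htrace : (p : R) ∣ C.trace :=
      (dvd_pow_self _ n.add_one_ne_zero).trans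
        (dvd_trace_of_det_one_add_smul_eq_one (pow_mem hreg _) hdet)
    refine memModulo_of_mem_leadingTerms hh (mem_leadingTerms_of_dvd_trace hp hp5 hmod htrace n) ?_
    rw [← hquot, Units.val_mul, Units.mul_inv_cancel_left]

end Approximation

section Topology

variable {R : Type*} [CommRing R] [TopologicalSpace R] {π : R}

theorem tendsto_pow_smul_of_isAdic (hπ : IsAdic (Ideal.span {π})) {m n : Type*}
    (c : ℕ → Matrix m n R) : Tendsto (fun k ↦ π ^ k • c k) atTop (𝓝 0) := by
  refine tendsto_pi_nhds.mpr fun i ↦ tendsto_pi_nhds.mpr fun j ↦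
    hπ.hasBasis_nhds_zero.tendsto_right_iff.mpr fun N _ ↦ ?_
  filter_upwards [eventually_ge_atTop N] with k hk
  rw [Ideal.span_singleton_pow]
  exact Ideal.mem_span_singleton.mpr ((pow_dvd_pow π hk).mul_right (c k i j))

theorem mem_closure_of_forall_memModulo_pow [IsTopologicalRing R] {ι : Type*} [Fintype ι]
    [DecidableEq ι] (hπ : IsAdic (Ideal.span {π})) {H : Subgroup (GL ι R)} {g : GL ι R}
    (hg : ∀ n, MemModulo H (π ^ n) g) : g ∈ closure (H : Set (GL ι R)) := by
  choose h hh c hc using hg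
  have hval (n : ℕ) : (h n : Matrix ι ι R) = g + π ^ n • -c n := by rw [hc]; module
  have hinv (n : ℕ) : (h n)⁻¹.val = g⁻¹.val + π ^ n • ((h n)⁻¹.val * c n * g⁻¹.val) :=
    coe_inv_eq_add_smul (hc n)
  have hlim : Tendsto h atTop (𝓝 g) := by
    refine Units.isInducing_embedProduct.tendsto_nhds_iff.mpr (Tendsto.prodMk_nhds ?_
      (MulOpposite.continuous_op.continuousAt.tendsto.comp ?_))
    · simpa only [Function.comp_def, hval, add_zero] using
        (tendsto_pow_smul_of_isAdic hπ _).const_add (g : Matrix ι ι R)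
    · rw [funext hinv]
      simpa only [add_zero] using
        (tendsto_pow_smul_of_isAdic hπ _).const_add (↑g⁻¹ : Matrix ι ι R)
  exact mem_closure_of_tendsto hlim (Eventually.of_forall hh)

end Topology

section PadicInt

theorem coe_span_pow_eq_closedBall (p n : ℕ) [Fact p.Prime] :
    ((Ideal.span {(p : ℤ_[p])} ^ n : Ideal ℤ_[p]) : Set ℤ_[p]) =
      Metric.closedBall 0 ((p : ℝ) ^ (-n : ℤ)) := by
  ext x
  rw [Ideal.span_singleton_pow, SetLike.mem_coe, ← PadicInt.norm_le_pow_iff_mem_span_pow,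
    mem_closedBall_zero_iff]

theorem isAdic_span_prime_padicInt (p : ℕ) [hp : Fact p.Prime] :
    IsAdic (Ideal.span {(p : ℤ_[p])}) := by
  refine isAdic_iff.mpr ⟨fun n ↦ ?_, fun s hs ↦ ?_⟩
  · rw [coe_span_pow_eq_closedBall]
    exact IsUltrametricDist.isOpen_closedBall 0
      (zpow_pos (Nat.cast_pos.mpr hp.out.pos) _).ne'
  · obtain ⟨ε, hε, hs⟩ := Metric.mem_nhds_iff.mp hs
    obtain ⟨n, hn⟩ := PadicInt.exists_pow_neg_lt p hε
    exact ⟨n, coe_span_pow_eq_closedBall p n ▸ (Metric.closedBall_subset_ball hn).trans hs⟩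

end PadicInt

section Lifting

variable {ι R k : Type*} [Fintype ι] [DecidableEq ι] [CommRing R] [Field k] {f : R →+* k}

theorem memModulo_of_map_eq {r : R} (hf : RingHom.ker f = Ideal.span {r}) {H : Subgroup (GL ι R)}
    {g h : GL ι R} (hh : h ∈ H) (hgh : GeneralLinearGroup.map f g = GeneralLinearGroup.map f h) :
    MemModulo H r g := by
  have hdvd (i j : ι) : r ∣ g i j - h i j := by
    rw [← Ideal.mem_span_singleton, ← hf, RingHom.mem_ker, map_sub, sub_eq_zero]
    exact congrArg (fun M : GL ι k ↦ M i j) hgh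
  choose c hc using hdvd
  exact ⟨h, hh, of c, ext fun i j ↦ eq_add_of_sub_eq' (hc i j)⟩

variable [TopologicalSpace R] [IsTopologicalRing R] {p : ℕ}

theorem mem_closure_of_det_eq_one (hp : p.Prime) (hp5 : 5 ≤ p) (hreg : (p : R) ∈ R⁰)
    (hadic : IsAdic (Ideal.span {(p : R)})) (hf : RingHom.ker f = Ideal.span {(p : R)})
    {H : Subgroup (GL ι R)} (hH : H ≤ GeneralLinearGroup.det.ker)
    (hmap : GeneralLinearGroup.det.ker ≤ H.map (GeneralLinearGroup.map f))
    {g : GL ι R} (hg : g.det = 1) : g ∈ closure (H : Set (GL ι R)) := by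
  have hmod (g : GL ι R) (hg : g.det = 1) : MemModulo H (p : R) g := by
    obtain ⟨h, hh, hhg⟩ := hmap (show GeneralLinearGroup.map f g ∈ _ by
      rw [MonoidHom.mem_ker, GeneralLinearGroup.map_det, hg, map_one])
    exact memModulo_of_map_eq hf hh hhg.symm
  exact mem_closure_of_forall_memModulo_pow hadic
    (memModulo_pow_of_det_eq_one hp hp5 hreg (fun h hh ↦ hH hh) hmod hg)

theorem closed_subgroup_full_det_full_mod_eq_top_general (hp : p.Prime) (hp5 : 5 ≤ p)
    (hreg : (p : R) ∈ R⁰) (hadic : IsAdic (Ideal.span {(p : R)}))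
    (hf : RingHom.ker f = Ideal.span {(p : R)}) (G : Subgroup (GL ι R))
    (hclosed : IsClosed (G : Set (GL ι R))) (hdet : G.map GeneralLinearGroup.det = ⊤)
    (hmod : G.map (GeneralLinearGroup.map f) = ⊤) : G = ⊤ := by
  have hchar : ringChar k = p := CharP.ringChar_of_prime_eq_zero hp <| by
    rw [← map_natCast f, ← RingHom.mem_ker, hf]
    exact Ideal.mem_span_singleton_self _
  have hneg : (-1 : kˣ) ≠ 1 := Units.ext_iff.not.mpr <| by
    simpa using Ring.neg_one_ne_one_of_char_ne_two (R := k) (by omega)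
  have hcomm : ⁅G, G⁆ ≤ GeneralLinearGroup.det.ker :=
    (Subgroup.commutator_mono le_top le_top).trans (Abelianization.commutator_subset_ker _)
  have hmap : GeneralLinearGroup.det.ker ≤ ⁅G, G⁆.map (GeneralLinearGroup.map f) := by
    rw [Subgroup.map_commutator, hmod]
    exact ker_det_le_commutator hneg
  have hker : GeneralLinearGroup.det.ker ≤ G := fun _ hg ↦
    closure_minimal (Subgroup.commutator_le_self G) hclosed
      (mem_closure_of_det_eq_one hp hp5 hreg hadic hf hcomm hmap hg)
  rw [← Subgroup.comap_map_eq_self hker, hdet, Subgroup.comap_top]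

end Lifting

/-- Let `G` be a closed subgroup of `GL₂(ℤ_ℓ)` for a prime `ℓ ≥ 5` such that
`det(G) = ℤ_ℓ^×` and the reduction of `G` modulo `ℓ` equals `GL₂(ℤ/ℓℤ)`. Then `G = GL₂(ℤ_ℓ)`. -/
theorem closed_subgroup_full_det_full_mod_eq_top
    (ℓ : ℕ) [Fact ℓ.Prime] (hℓ : 5 ≤ ℓ)
    (G : Subgroup (GL (Fin 2) ℤ_[ℓ]))
    (hclosed : IsClosed (G : Set (GL (Fin 2) ℤ_[ℓ])))
    (hdet : G.map (Matrix.GeneralLinearGroup.det) = ⊤)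
    (hmod : G.map (Matrix.GeneralLinearGroup.map (PadicInt.toZMod : ℤ_[ℓ] →+* ZMod ℓ)) = ⊤) :
    G = ⊤ :=
  closed_subgroup_full_det_full_mod_eq_top_general (Fact.out : ℓ.Prime) hℓ
    (mem_nonZeroDivisors_of_ne_zero PadicInt.prime_p.ne_zero) (isAdic_span_prime_padicInt ℓ)
    (PadicInt.ker_toZMod.trans PadicInt.maximalIdeal_eq_span_p) G hclosed hdet hmod
end

section
/- Let H be a closed normal subgroup of GL₂(ℤ₃). Let φ₃: GL₂(ℤ₃) → S₃ be the surjective homomorphism obtained by composing reduction modulo 3 with the quotient map GL₂(𝔽₃) → GL₂(𝔽₃)/[SL₂(𝔽₃),SL₂(𝔽₃)] ≅ S₃. Then either φ₃(H) = 1 or H ⊇ SL₂(ℤ₃). -/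
open Matrix MatrixGroups

/-- The reduction map `GL₂(ℤ₃) → GL₂(𝔽₃)`. -/
noncomputable def red3 : GL (Fin 2) ℤ_[3] →* GL (Fin 2) (ZMod 3) :=
  Matrix.GeneralLinearGroup.map (PadicInt.toZMod : ℤ_[3] →+* ZMod 3)

/-- The commutator subgroup `[SL₂(𝔽₃), SL₂(𝔽₃)]`, viewed inside `GL₂(𝔽₃)`. -/
def commSL2F3 : Subgroup (GL (Fin 2) (ZMod 3)) :=
  Subgroup.map (Matrix.SpecialLinearGroup.toGL : SL(2, ZMod 3) →* GL (Fin 2) (ZMod 3))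
    (commutator (SL(2, ZMod 3)))

/-!
Over a commutative ring, `g ∈ GL₂` is conjugate to the companion matrix `C(t, d)` of its
characteristic polynomial as soon as some `v` forms a basis together with `g v`; over a local ring
this happens exactly when the reduction of `g` is not scalar. A normal subgroup `N` therefore
contains `C(t, d)` with `g`, and hence also

* `[diag(-1, 1), C(t, d)]² = U(-4t)`, where `U(x)` is upper unitriangular with corner `x`. If `4t`
  is a unit, then `N` contains all `U(x)`, and with them `SL₂`;
* `[U(1), C(t, d)]`, which is conjugate to `C(2 + d⁻¹, 1)`. If `d` reduces to `-1` in `𝔽₃`, this has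
  unit trace, so that the first point applies to it.

What is left are elements whose image in `GL₂(𝔽₃)` is scalar or has trace `0` and determinant `1`.
For `t = 0` and `d = 1` in `𝔽₃` the second point shows `C(0, 1)` to be conjugate to a commutator in
`SL₂(𝔽₃)`, and the scalars are `1` and `C(0, 1)² = -1`; so these images lie in
`[SL₂(𝔽₃), SL₂(𝔽₃)]`.
-/

open scoped commutatorElement

theorem mem_iff_mem_of_isConj {G : Type*} [Group G] (N : Subgroup G) [N.Normal] {g h : G}
    (hgh : IsConj g h) : g ∈ N ↔ h ∈ N := by
  obtain ⟨c, rfl⟩ := isConj_iff.mp hgh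
  rw [‹N.Normal›.mem_comm_iff, inv_mul_cancel_left]

theorem commutator_mem_of_mem_right {G : Type*} [Group G] (N : Subgroup G) [N.Normal] (g : G)
    {h : G} (hh : h ∈ N) : ⁅g, h⁆ ∈ N :=
  Subgroup.commutator_le_right ⊤ N (Subgroup.commutator_mem_commutator (Subgroup.mem_top g) hh)

section CommRing

open GeneralLinearGroup (upperRightHom)

variable {R : Type*} [CommRing R]

/-- The companion matrix of `X² - tX + d`, a normal form for non-scalar elements of `GL₂` under
conjugation. The trace stands in the upper left corner. -/
def companionGL (t : R) (d : Rˣ) : GL (Fin 2) R :=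
  ⟨!![t, -d; 1, 0], !![0, 1; -↑d⁻¹, ↑d⁻¹ * t], by simp [one_fin_two], by simp [one_fin_two]⟩

/-- The diagonal matrix with entries `u` and `1`. Conjugation by it multiplies the argument of
`upperRightHom` by `u`. -/
def diagGL (u : Rˣ) : GL (Fin 2) R :=
  ⟨!![↑u, 0; 0, 1], !![↑u⁻¹, 0; 0, 1], by simp [one_fin_two], by simp [one_fin_two]⟩

theorem isConj_companionGL (g : GL (Fin 2) R) (x y : R)
    (h : IsUnit (g 1 0 * x ^ 2 + (g 1 1 - g 0 0) * x * y - g 0 1 * y ^ 2)) :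
    IsConj g (companionGL g.val.trace (GeneralLinearGroup.det g)) := by
  -- The columns of `P` are `v = (x, y)` and `g v - tr(g) v`.
  let P : Matrix (Fin 2) (Fin 2) R :=
    !![x, g 0 1 * y - g 1 1 * x; y, g 1 0 * x - g 0 0 * y]
  have hP : IsUnit P.det := by
    convert h using 1
    simp only [P, det_fin_two_of]
    ring
  have hdet : (GeneralLinearGroup.det g : R) = g 0 0 * g 1 1 - g 0 1 * g 1 0 := det_fin_two _
  refine IsConj.symm (isConj_iff.mpr ⟨GeneralLinearGroup.mk'' P hP, ?_⟩)
  rw [mul_inv_eq_iff_eq_mul]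
  ext i j
  fin_cases i <;> fin_cases j <;>
    simp [P, companionGL, hdet, trace_fin_two, Matrix.mul_apply] <;> ring

theorem coe_commutator_upperRightHom_companionGL (x t : R) (d : Rˣ) :
    (⁅upperRightHom x, companionGL t d⁆).val =
      !![1 + x * (x + t) * ↑d⁻¹, x - x * t * (x + t) * ↑d⁻¹; x * ↑d⁻¹, 1 - x * t * ↑d⁻¹] := by
  have coe_eq_mul : (⁅upperRightHom x, companionGL t d⁆).val =
      !![1, x; 0, 1] * !![t, -d; 1, 0] * !![1, -x; 0, 1] * !![0, 1; -↑d⁻¹, ↑d⁻¹ * t] := rfl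
  rw [coe_eq_mul]
  simp only [mul_fin_two, EmbeddingLike.apply_eq_iff_eq, vecCons_inj, and_true]
  refine ⟨⟨?_, ?_⟩, ?_, ?_⟩
  · linear_combination d.mul_inv
  · linear_combination -t * d.mul_inv
  · ring
  · ring

theorem isConj_commutator_upperRightHom_companionGL (u : Rˣ) (t : R) (d : Rˣ) :
    IsConj ⁅upperRightHom (u : R), companionGL t d⁆ (companionGL (2 + u ^ 2 * ↑d⁻¹) 1) := by
  have hval := coe_commutator_upperRightHom_companionGL (u : R) t d
  have trace_eq : (⁅upperRightHom (u : R), companionGL t d⁆).val.trace = 2 + u ^ 2 * ↑d⁻¹ := by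
    rw [hval, trace_fin_two_of]
    ring
  have det_eq : GeneralLinearGroup.det ⁅upperRightHom (u : R), companionGL t d⁆ = 1 := by
    rw [map_commutatorElement, commutatorElement_eq_one_iff_mul_comm, mul_comm]
  rw [← trace_eq, ← det_eq]
  exact isConj_companionGL _ 1 0 (by simp [hval, -GeneralLinearGroup.upperRightHom_apply])

theorem commutator_diagGL_neg_one_companionGL (t : R) (d : Rˣ) :
    ⁅diagGL (-1 : Rˣ), companionGL t d⁆ = -upperRightHom (-2 * t) := by
  rw [commutatorElement_def, mul_inv_eq_iff_eq_mul, mul_inv_eq_iff_eq_mul]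
  ext i j
  fin_cases i <;> fin_cases j <;>
    simp [diagGL, companionGL, Matrix.mul_apply, two_mul]

theorem diagGL_mul_upperRightHom_mul_inv (u : Rˣ) (x : R) :
    diagGL u * upperRightHom x * (diagGL u)⁻¹ = upperRightHom (u * x) := by
  rw [mul_inv_eq_iff_eq_mul]
  ext i j
  fin_cases i <;> fin_cases j <;> simp [diagGL]

theorem companionGL_one_eq_upperRightHom_mul (t : R) :
    companionGL t 1 = upperRightHom t * companionGL 0 1 := by
  ext i j
  fin_cases i <;> fin_cases j <;> simp [companionGL]

theorem companionGL_zero_one_eq_upperRightHom_mul_conj_mul :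
    companionGL (0 : R) 1 = upperRightHom (-1) *
      (companionGL 0 1 * upperRightHom (-1) * (companionGL 0 1)⁻¹) * upperRightHom (-1) := by
  ext i j
  fin_cases i <;> fin_cases j <;> simp [companionGL]

theorem companionGL_zero_one_sq : companionGL (0 : R) 1 ^ 2 = -1 := by
  ext i j
  fin_cases i <;> fin_cases j <;> simp [companionGL, sq]

theorem map_upperRightHom {S : Type*} [CommRing S] (f : R →+* S) (x : R) :
    GeneralLinearGroup.map f (upperRightHom x) = upperRightHom (f x) := by
  ext i j
  fin_cases i <;> fin_cases j <;> simp

theorem upperRightHom_notMem_center {x : R} (hx : x ≠ 0) :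
    upperRightHom x ∉ Subgroup.center (GL (Fin 2) R) := by
  rw [GeneralLinearGroup.mem_center_iff_val_mem_range_scalar]
  rintro ⟨a, ha⟩
  exact hx (by simpa using (congrFun₂ ha 0 1).symm)

theorem isConj_companionGL_of_map_notMem_center {F : Type*} [Field F] (π : R →+* F) [IsLocalHom π]
    {g : GL (Fin 2) R} (hg : GeneralLinearGroup.map π g ∉ Subgroup.center (GL (Fin 2) F)) :
    IsConj g (companionGL g.val.trace (GeneralLinearGroup.det g)) := by
  contrapose! hg
  have eval_eq_zero (x y : R) :
      π (g 1 0 * x ^ 2 + (g 1 1 - g 0 0) * x * y - g 0 1 * y ^ 2) = 0 := by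
    by_contra hne
    exact hg (isConj_companionGL g x y (isUnit_of_map_unit π _ (Ne.isUnit hne)))
  have hc : π (g 1 0) = 0 := by simpa using eval_eq_zero 1 0
  have hb : π (g 0 1) = 0 := by simpa using eval_eq_zero 0 1
  have hda : π (g 1 1) = π (g 0 0) := by simpa [hb, hc, sub_eq_zero] using eval_eq_zero 1 1
  refine GeneralLinearGroup.mem_center_iff_val_mem_range_scalar.mpr ⟨π (g 0 0), ?_⟩
  ext i j
  fin_cases i <;> fin_cases j <;> simp [hb, hc, hda]

theorem toGL_range_eq_det_ker {n : Type*} [Fintype n] [DecidableEq n] :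
    (SpecialLinearGroup.toGL : SpecialLinearGroup n R →* GL n R).range =
      GeneralLinearGroup.det.ker :=
  SetLike.coe_injective SpecialLinearGroup.range_toGL

section Normal

variable (N : Subgroup (GL (Fin 2) R)) [N.Normal]

theorem companionGL_one_mem_of_companionGL_mem (u : Rˣ) {t : R} {d : Rˣ}
    (hN : companionGL t d ∈ N) : companionGL (2 + (u : R) ^ 2 * ↑d⁻¹) 1 ∈ N :=
  (mem_iff_mem_of_isConj N (isConj_commutator_upperRightHom_companionGL u t d)).mp
    (commutator_mem_of_mem_right N _ hN)

variable [IsLocalRing R]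

theorem upperRightHom_mem_of_isUnit {x : R} (hx : IsUnit x) (hN : upperRightHom x ∈ N) (y : R) :
    upperRightHom y ∈ N := by
  obtain ⟨u, rfl⟩ := hx
  have unit_mem (v : Rˣ) : upperRightHom (v : R) ∈ N := by
    have := ‹N.Normal›.conj_mem _ hN (diagGL (v * u⁻¹))
    rwa [diagGL_mul_upperRightHom_mul_inv, ← Units.val_mul, inv_mul_cancel_right] at this
  obtain ⟨v, rfl⟩ | ⟨v, hv⟩ := IsLocalRing.isUnit_or_isUnit_one_sub_self y
  · exact unit_mem v
  · have hy : y = ((1 : Rˣ) : R) + ((-v : Rˣ) : R) := by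
      rw [Units.val_one, Units.val_neg, hv, neg_sub, add_sub_cancel]
    rw [hy, AddChar.map_add_eq_mul]
    exact N.mul_mem (unit_mem 1) (unit_mem (-v))

theorem det_ker_le_of_upperRightHom_mem {x : R} (hx : IsUnit x) (hN : upperRightHom x ∈ N) :
    GeneralLinearGroup.det.ker ≤ N := by
  have upper_mem := upperRightHom_mem_of_isUnit N hx hN
  have companion_mem (t : R) : companionGL t 1 ∈ N := by
    rw [companionGL_one_eq_upperRightHom_mul, companionGL_zero_one_eq_upperRightHom_mul_conj_mul]
    exact N.mul_mem (upper_mem t) (N.mul_mem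
      (N.mul_mem (upper_mem _) (‹N.Normal›.conj_mem _ (upper_mem _) _)) (upper_mem _))
  let π := GeneralLinearGroup.map (n := Fin 2) (IsLocalRing.residue R)
  have mem_of_notMem_center {g : GL (Fin 2) R} (hg : g ∈ GeneralLinearGroup.det.ker)
      (hπ : π g ∉ Subgroup.center _) : g ∈ N := by
    rw [mem_iff_mem_of_isConj N (isConj_companionGL_of_map_notMem_center _ hπ), hg]
    exact companion_mem _
  intro g hg
  by_cases hπ : π g ∈ Subgroup.center _
  · have upper_det : GeneralLinearGroup.det (upperRightHom (1 : R)) = 1 := by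
      ext
      simp
    have upper_notMem_center : π (upperRightHom 1) ∉ Subgroup.center _ := by
      rw [map_upperRightHom, map_one]
      exact upperRightHom_notMem_center one_ne_zero
    rw [← N.mul_mem_cancel_right (upper_mem 1)]
    refine mem_of_notMem_center (mul_mem hg upper_det) ?_
    rwa [map_mul, Subgroup.mul_mem_cancel_left _ hπ]
  · exact mem_of_notMem_center hg hπ

theorem det_ker_le_of_companionGL_mem (two_unit : IsUnit (2 : R)) {t : R} (ht : IsUnit t) {d : Rˣ}
    (hN : companionGL t d ∈ N) : GeneralLinearGroup.det.ker ≤ N := by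
  have neg_mem : -upperRightHom (-2 * t) ∈ N := by
    rw [← commutator_diagGL_neg_one_companionGL t d]
    exact commutator_mem_of_mem_right N _ hN
  refine det_ker_le_of_upperRightHom_mem N (x := 2 • (-2 * t)) ?_ ?_
  · simpa using two_unit.mul (two_unit.mul ht)
  · rw [AddChar.map_nsmul_eq_pow, ← neg_sq]
    exact N.pow_mem neg_mem 2

end Normal

end CommRing

theorem commSL2F3_eq_commutator_det_ker :
    commSL2F3 = ⁅(GeneralLinearGroup.det : GL (Fin 2) (ZMod 3) →* _).ker,
      GeneralLinearGroup.det.ker⁆ := by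
  rw [commSL2F3, map_commutator_eq, toGL_range_eq_det_ker]

instance commSL2F3_normal : commSL2F3.Normal := by
  rw [commSL2F3_eq_commutator_det_ker]
  infer_instance

theorem companionGL_zero_one_mem_commSL2F3 : companionGL 0 1 ∈ commSL2F3 := by
  have hconj := isConj_commutator_upperRightHom_companionGL (1 : (ZMod 3)ˣ) 0 1
  have trace_eq : (2 + ((1 : (ZMod 3)ˣ) : ZMod 3) ^ 2 * ↑(1 : (ZMod 3)ˣ)⁻¹) = 0 := by decide
  rw [trace_eq] at hconj
  rw [← mem_iff_mem_of_isConj _ hconj, commSL2F3_eq_commutator_det_ker]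
  refine Subgroup.commutator_mem_commutator ?_ ?_ <;> ext <;> simp [companionGL]

theorem units_zmod_three_eq_one_or_neg_one (u : (ZMod 3)ˣ) : u = 1 ∨ u = -1 := by
  decide +revert

theorem center_le_commSL2F3 : Subgroup.center (GL (Fin 2) (ZMod 3)) ≤ commSL2F3 := by
  rw [GeneralLinearGroup.center_eq_range_scalar]
  rintro _ ⟨u, rfl⟩
  obtain rfl | rfl := units_zmod_three_eq_one_or_neg_one u
  · rw [map_one]
    exact one_mem _
  · have scalar_neg_one : GeneralLinearGroup.scalar (Fin 2) (-1 : (ZMod 3)ˣ) = -1 := by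
      ext i j
      fin_cases i <;> fin_cases j <;> simp
    rw [scalar_neg_one, ← companionGL_zero_one_sq]
    exact pow_mem companionGL_zero_one_mem_commSL2F3 2

theorem mem_commSL2F3_of_trace_of_det {g : GL (Fin 2) (ZMod 3)} (htrace : g.val.trace = 0)
    (hdet : GeneralLinearGroup.det g = 1) : g ∈ commSL2F3 := by
  by_cases hg : g ∈ Subgroup.center _
  · exact center_le_commSL2F3 hg
  · have hconj := isConj_companionGL_of_map_notMem_center (RingHom.id (ZMod 3)) (g := g) (by simpa)
    rw [mem_iff_mem_of_isConj _ hconj, htrace, hdet]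
    exact companionGL_zero_one_mem_commSL2F3

theorem normal_closed_subgroup_GL2_Z3_trichotomy_general {R : Type*} [CommRing R]
    (π : R →+* ZMod 3) [IsLocalHom π] (H : Subgroup (GL (Fin 2) R)) [H.Normal] :
    H ≤ commSL2F3.comap (GeneralLinearGroup.map π) ∨ GeneralLinearGroup.det.ker ≤ H := by
  have := π.domain_isLocalRing
  have isUnit_of_map_ne {x : R} (hx : π x ≠ 0) : IsUnit x := isUnit_of_map_unit π x (Ne.isUnit hx)
  have two_unit : IsUnit (2 : R) := isUnit_of_map_ne (by rw [map_ofNat]; decide)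
  refine or_iff_not_imp_left.mpr fun hne => ?_
  obtain ⟨g, hgH, hg⟩ := SetLike.not_le_iff_exists.mp hne
  have companion_mem : companionGL g.val.trace (GeneralLinearGroup.det g) ∈ H :=
    (mem_iff_mem_of_isConj H (isConj_companionGL_of_map_notMem_center π
      fun hc => hg (center_le_commSL2F3 hc))).mp hgH
  by_cases htrace : π g.val.trace = 0
  · have map_det_ne : Units.map (π : R →* ZMod 3) (GeneralLinearGroup.det g) ≠ 1 := by
      rw [← GeneralLinearGroup.map_det]
      refine fun hdet => hg (mem_commSL2F3_of_trace_of_det ?_ hdet)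
      rwa [AddMonoidHom.map_trace] at htrace
    have map_det_eq : Units.map (π : R →* ZMod 3) (GeneralLinearGroup.det g) = -1 :=
      (units_zmod_three_eq_one_or_neg_one _).resolve_left map_det_ne
    refine det_ker_le_of_companionGL_mem H two_unit (isUnit_of_map_ne ?_)
      (companionGL_one_mem_of_companionGL_mem H 1 companion_mem)
    have map_det_inv : π ↑(GeneralLinearGroup.det g)⁻¹ = -1 :=
      congrArg Units.val ((map_inv _ _).trans ((congrArg _ map_det_eq).trans inv_neg_one))
    rw [map_add, map_mul, map_det_inv, Units.val_one, one_pow, map_one, map_ofNat]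
    decide
  · exact det_ker_le_of_companionGL_mem H two_unit (isUnit_of_map_ne htrace) companion_mem

/-- Let `H` be a closed normal subgroup of `GL₂(ℤ₃)`. Let
`φ₃ : GL₂(ℤ₃) → S₃` be the surjective homomorphism obtained by composing reduction modulo 3
with the quotient map `GL₂(𝔽₃) → GL₂(𝔽₃)/[SL₂(𝔽₃),SL₂(𝔽₃)] ≅ S₃` (so `φ₃` is surjective with
kernel the preimage under reduction of `[SL₂(𝔽₃),SL₂(𝔽₃)]`). Then either `φ₃(H) = 1` or
`H ⊇ SL₂(ℤ₃)`. -/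
theorem normal_closed_subgroup_GL2_Z3_trichotomy
    (φ : GL (Fin 2) ℤ_[3] →* Equiv.Perm (Fin 3))
    (hsurj : Function.Surjective φ)
    (hker : φ.ker = commSL2F3.comap red3)
    (H : Subgroup (GL (Fin 2) ℤ_[3]))
    (hclosed : IsClosed (H : Set (GL (Fin 2) ℤ_[3])))
    (hnormal : H.Normal) :
    H.map φ = ⊥ ∨
      (Matrix.GeneralLinearGroup.det : GL (Fin 2) ℤ_[3] →* ℤ_[3]ˣ).ker ≤ H := by
  have : IsLocalHom (PadicInt.toZMod : ℤ_[3] →+* ZMod 3) :=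
    .of_surjective _ (ZMod.ringHom_surjective _)
  rw [Subgroup.map_eq_bot_iff, hker]
  exact normal_closed_subgroup_GL2_Z3_trichotomy_general PadicInt.toZMod H
end

section
/- Let G be a closed subgroup of GL₂(ℤ_N), where N = ∏_p p^{e_p} > 1 with e₂ ≠ 1. For each prime ℓ | N, set N_ℓ = ℓ^{e_ℓ} · ∏_{p | N, p² ≡ 1 mod ℓ} p. Suppose for each prime ℓ | N, the image of G in GL₂(ℤ/N_ℓ ℓ ℤ) contains all matrices congruent to I modulo N_ℓ. Then G is an open subgroup of GL₂(ℤ_N) of level dividing N. -/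
open Matrix

instance (N : ℕ) (p : {q : ℕ // q.Prime ∧ q ∣ N}) : Fact (Nat.Prime p.1) := ⟨p.2.1⟩

/-- The ring `ℤ_N = ∏_{ℓ ∣ N} ℤ_ℓ`. -/
abbrev ZN (N : ℕ) : Type := (p : {q : ℕ // q.Prime ∧ q ∣ N}) → ℤ_[p.1]

/-- `A ≡ B (mod m)` in `GL₂(ℤ_N)`: for each prime `p ∣ N`, the components of `A` and `B` at `p`
agree modulo `p^{v_p(m)}`. -/
def CongrMod (N m : ℕ) (A B : GL (Fin 2) (ZN N)) : Prop :=
  ∀ p : {q : ℕ // q.Prime ∧ q ∣ N},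
    Matrix.GeneralLinearGroup.map
      ((PadicInt.toZModPow (m.factorization p.1)).comp
        (Pi.evalRingHom (fun q : {q : ℕ // q.Prime ∧ q ∣ N} => ℤ_[q.1]) p)) A
    = Matrix.GeneralLinearGroup.map
      ((PadicInt.toZModPow (m.factorization p.1)).comp
        (Pi.evalRingHom (fun q : {q : ℕ // q.Prime ∧ q ∣ N} => ℤ_[q.1]) p)) B

/-- `N_ℓ = ℓ^{e_ℓ} ∏_{p ∣ N, p² ≡ 1 mod ℓ} p`. -/
def Nell (N ℓ : ℕ) : ℕ :=
  ℓ ^ (N.factorization ℓ) *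
    ∏ p ∈ N.primeFactors.filter (fun p : ℕ => ((p : ZMod ℓ) ^ 2 = 1)), p

/-!
Fix a prime `ℓ ∣ N` and put `e = v_ℓ(N)`. The component at `ℓ` of the matrix `g ∈ G` supplied by
the hypothesis is a prescribed matrix `≡ 1` modulo `ℓ ^ e`, up to `ℓ ^ (e + 1)`; modulo
`ℓ ^ (e + 1)` its order divides `ℓ`. At a prime `q ≠ ℓ` the component of `g` modulo any power of `q`
has order prime to `ℓ`: if `q² ≢ 1` modulo `ℓ` then `ℓ` does not divide `|GL₂(𝔽_q)|`, and otherwise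
`q ∣ N_ℓ` forces `g ≡ 1` modulo `q`, so that the component lies in a pro-`q` group. A power `gⁿ`
with `n ≡ 1` modulo `ℓ` therefore approximates an element supported at `ℓ` alone. Taking `ℓ`-th
powers propagates the approximation from level `ℓ ^ (e + 1)` to all higher levels (for `ℓ = 2` this
needs `e ≥ 2`). Multiplying the resulting elements over all `ℓ ∣ N` puts the congruence subgroup of
level `N` in the closure of `G`, which is `G`.
-/

open Filter Topology

section PowerExpansion

open Polynomial in
lemma exists_one_add_pow_eq {R : Type*} [Ring R] (x : R) (m : ℕ) :
    ∃ y : R, (1 + x) ^ m = 1 + (m : R) * x + (m.choose 2 : R) * x ^ 2 + x ^ 3 * y := by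
  have hdvd : (X : ℤ[X]) ^ 3 ∣
      (1 + X) ^ m - (1 + (m : ℤ[X]) * X + (m.choose 2 : ℤ[X]) * X ^ 2) := by
    rw [X_pow_dvd_iff]
    intro d hd
    simp only [← C_eq_natCast, coeff_sub, coeff_add, coeff_one_add_X_pow, coeff_one, coeff_C_mul,
      coeff_X, coeff_X_pow]
    interval_cases d <;> simp
  obtain ⟨f, hf⟩ := hdvd
  refine ⟨aeval x f, ?_⟩
  simpa using congrArg (aeval x) (sub_eq_iff_eq_add'.mp hf)

lemma exists_one_add_smul_pow_eq {R M : Type*} [CommRing R] [Ring M] [Algebra R M] {r d : R}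
    {m : ℕ} (hd₂ : d ∣ (m.choose 2 : R) * r ^ 2) (hd₃ : d ∣ r ^ 3) (x : M) :
    ∃ y : M, (1 + r • x) ^ m = 1 + ((m : R) * r) • x + d • y := by
  obtain ⟨y, hy⟩ := exists_one_add_pow_eq (r • x) m
  obtain ⟨u, hu⟩ := hd₂
  obtain ⟨v, hv⟩ := hd₃
  refine ⟨u • x ^ 2 + v • (x ^ 3 * y), ?_⟩
  rw [hy, smul_pow, smul_pow, hv, ← map_natCast (algebraMap R M) m,
    ← map_natCast (algebraMap R M) (m.choose 2), ← Algebra.smul_def, ← Algebra.smul_def, smul_smul,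
    smul_smul, hu, smul_mul_assoc]
  module

lemma prime_sq_dvd_choose_two_mul_pow {p n : ℕ} (hp : p.Prime) (hn : n ≠ 0)
    (hp2 : p = 2 → n ≠ 1) : p ^ 2 ∣ p.choose 2 * p ^ n := by
  rcases eq_or_ne p 2 with rfl | hne
  · exact (pow_dvd_pow 2 (by have := hp2 rfl; omega)).mul_left _
  · rw [sq]
    exact mul_dvd_mul (hp.dvd_choose_self two_ne_zero (hp.two_le.lt_of_ne' hne)) (dvd_pow_self p hn)

end PowerExpansion

section PrincipalCongruence

variable {ι R S : Type*} [Fintype ι] [DecidableEq ι] [CommRing R] [CommRing S]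

lemma map_eq_map_iff_exists_smul {f : R →+* S} {r : R} (hf : RingHom.ker f = Ideal.span {r})
    {A B : GL ι R} :
    GeneralLinearGroup.map f A = GeneralLinearGroup.map f B ↔
      ∃ E : Matrix ι ι R, (A : Matrix ι ι R) = B + r • E := by
  have hentry (x y : R) : f x = f y ↔ ∃ e, x = y + r * e := by
    rw [← sub_eq_zero, ← map_sub, ← RingHom.mem_ker, hf, Ideal.mem_span_singleton]
    simp only [dvd_def, sub_eq_iff_eq_add']
  simp only [GeneralLinearGroup.ext_iff, GeneralLinearGroup.map_apply, hentry]
  constructor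
  · intro h
    choose E hE using h
    exact ⟨of E, by ext i j; simp [hE i j]⟩
  · rintro ⟨E, hE⟩ i j
    exact ⟨E i j, by simp [hE]⟩

lemma mem_ker_map_iff_exists_smul {f : R →+* S} {r : R} (hf : RingHom.ker f = Ideal.span {r})
    {A : GL ι R} :
    A ∈ (GeneralLinearGroup.map f).ker ↔
      ∃ E : Matrix ι ι R, (A : Matrix ι ι R) = 1 + r • E := by
  rw [MonoidHom.mem_ker, ← map_one (GeneralLinearGroup.map f), map_eq_map_iff_exists_smul hf,
    Units.val_one]

variable (ι) in
/-- The principal congruence subgroup of level `r`: the invertible matrices congruent to `1`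
modulo `r`. -/
def principalCongruence (r : R) : Subgroup (GL ι R) :=
  (GeneralLinearGroup.map (Ideal.Quotient.mk (Ideal.span {r}))).ker

instance (r : R) : (principalCongruence ι r).Normal :=
  MonoidHom.normal_ker _

lemma mem_principalCongruence {r : R} {A : GL ι R} :
    A ∈ principalCongruence ι r ↔ ∃ E : Matrix ι ι R, (A : Matrix ι ι R) = 1 + r • E :=
  mem_ker_map_iff_exists_smul Ideal.mk_ker

lemma ker_map_eq_principalCongruence {f : R →+* S} {r : R} (hf : RingHom.ker f = Ideal.span {r}) :
    (GeneralLinearGroup.map f).ker = principalCongruence ι r := by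
  ext A
  rw [mem_ker_map_iff_exists_smul hf, mem_principalCongruence]

lemma principalCongruence_le_of_dvd {r s : R} (h : r ∣ s) :
    principalCongruence ι s ≤ principalCongruence ι r := by
  intro A hA
  obtain ⟨t, rfl⟩ := h
  obtain ⟨E, hE⟩ := mem_principalCongruence.mp hA
  exact mem_principalCongruence.mpr ⟨t • E, by rw [hE, mul_smul]⟩

lemma mem_sup_principalCongruence {H : Subgroup (GL ι R)} {r : R} {A : GL ι R} :
    A ∈ H ⊔ principalCongruence ι r ↔
      ∃ B ∈ H, ∃ E : Matrix ι ι R, (B : Matrix ι ι R) = A + r • E := by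
  rw [principalCongruence, ← Subgroup.comap_map_eq, Subgroup.mem_comap, Subgroup.mem_map]
  simp only [map_eq_map_iff_exists_smul Ideal.mk_ker]

lemma isOpen_principalCongruence [TopologicalSpace R] [IsTopologicalRing R] {r : R}
    (hr : IsOpen (Ideal.span {r} : Set R)) : IsOpen (principalCongruence ι r : Set (GL ι R)) := by
  have heq : (principalCongruence ι r : Set (GL ι R)) =
      ⋂ (i : ι) (j : ι), (fun A : GL ι R => (A : Matrix ι ι R) i j - (1 : Matrix ι ι R) i j) ⁻¹'
        (Ideal.span {r} : Set R) := by
    ext A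
    simp only [SetLike.mem_coe, Set.mem_iInter, Set.mem_preimage, Ideal.mem_span_singleton]
    rw [mem_principalCongruence]
    constructor
    · rintro ⟨E, hE⟩ i j
      exact ⟨E i j, by simp [hE]⟩
    · intro h
      choose E hE using h
      exact ⟨of E, by ext i j; simp [← hE i j]⟩
  rw [heq]
  refine isOpen_iInter_of_finite fun i => isOpen_iInter_of_finite fun j => hr.preimage ?_
  exact (Units.continuous_val.matrix_elem i j).sub continuous_const

lemma pow_natCast_mem_principalCongruence {r : R} {m : ℕ} (hm : (m : R) ∣ r) {A : GL ι R}
    (hA : A ∈ principalCongruence ι r) : A ^ m ∈ principalCongruence ι ((m : R) * r) := by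
  obtain ⟨E, hE⟩ := mem_principalCongruence.mp hA
  have hsq : (m : R) * r ∣ r ^ 2 := sq r ▸ mul_dvd_mul_right hm r
  obtain ⟨F, hF⟩ := exists_one_add_smul_pow_eq (m := m) (hsq.mul_left _)
    (hsq.trans (pow_dvd_pow r (by norm_num))) E
  exact mem_principalCongruence.mpr
    ⟨E + F, by rw [Units.val_pow_eq_pow_val, hE, hF, smul_add, add_assoc]⟩

lemma pow_pow_mem_principalCongruence {m : ℕ} {A : GL ι R}
    (hA : A ∈ principalCongruence ι (m : R)) (k : ℕ) :
    A ^ m ^ k ∈ principalCongruence ι ((m : R) ^ (k + 1)) := by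
  induction k with
  | zero => simpa using hA
  | succ k ih =>
    rw [pow_succ m, pow_mul, pow_succ' (m : R) (k + 1)]
    exact pow_natCast_mem_principalCongruence (dvd_pow_self _ k.succ_ne_zero) ih

lemma exists_coe_eq_one_add_smul {r : R} (hr : r ∈ Ideal.jacobson (⊥ : Ideal R))
    (E : Matrix ι ι R) : ∃ A : GL ι R, (A : Matrix ι ι R) = 1 + r • E := by
  have hdet : IsUnit (1 + r • E).det := by
    rw [det_one_add_smul, show ∀ t d : R, 1 + t * r + d * r ^ 2 = r * (t + d * r) + 1 by
      intro t d; ring]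
    exact Ideal.mem_jacobson_bot.mp hr _
  exact (isUnit_iff_isUnit_det _).mpr hdet

variable {p : ℕ} {H : Subgroup (GL ι R)}

-- Since `(1 + pⁿE)ᵖ ≡ 1 + pⁿ⁺¹E` modulo `pⁿ⁺²`, taking `p`-th powers carries representatives of
-- level `pⁿ` to representatives of level `pⁿ⁺¹`.
lemma principalCongruence_succ_le_sup (hp : p.Prime) (hJ : (p : R) ∈ Ideal.jacobson (⊥ : Ideal R))
    {n : ℕ} (hn : n ≠ 0) (hp2 : p = 2 → n ≠ 1)
    (hH : principalCongruence ι ((p : R) ^ n) ≤ H ⊔ principalCongruence ι ((p : R) ^ (n + 1))) :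
    principalCongruence ι ((p : R) ^ (n + 1)) ≤ H ⊔ principalCongruence ι ((p : R) ^ (n + 2)) := by
  intro A hA
  obtain ⟨E, hE⟩ := mem_principalCongruence.mp hA
  obtain ⟨B, hB⟩ := exists_coe_eq_one_add_smul (Ideal.pow_mem_of_mem _ hJ n hn.bot_lt) E
  obtain ⟨C, hC, F, hF⟩ := mem_sup_principalCongruence.mp (hH (mem_principalCongruence.mpr ⟨E, hB⟩))
  have hC_eq : (C : Matrix ι ι R) = 1 + (p : R) ^ n • (E + (p : R) • F) := by
    rw [hF, hB]; module
  have hchoose : (p : R) ^ (n + 2) ∣ (p.choose 2 : R) * ((p : R) ^ n) ^ 2 := by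
    obtain ⟨c, hc⟩ := prime_sq_dvd_choose_two_mul_pow hp hn hp2
    refine ⟨c, ?_⟩
    have hc' : (p.choose 2 : R) * (p : R) ^ n = (p : R) ^ 2 * c := by exact_mod_cast congrArg _ hc
    linear_combination (p : R) ^ n * hc'
  have hcube : (p : R) ^ (n + 2) ∣ ((p : R) ^ n) ^ 3 := by
    rw [← pow_mul]; exact pow_dvd_pow _ (by omega)
  obtain ⟨K, hK⟩ := exists_one_add_smul_pow_eq hchoose hcube (E + (p : R) • F)
  refine mem_sup_principalCongruence.mpr ⟨C ^ p, pow_mem hC p, F + K, ?_⟩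
  rw [Units.val_pow_eq_pow_val, hC_eq, hK, hE]
  module

lemma principalCongruence_pow_le_sup (hp : p.Prime) (hJ : (p : R) ∈ Ideal.jacobson (⊥ : Ideal R))
    {n : ℕ} (hn : n ≠ 0) (hp2 : p = 2 → n ≠ 1)
    (hH : principalCongruence ι ((p : R) ^ n) ≤ H ⊔ principalCongruence ι ((p : R) ^ (n + 1)))
    (m : ℕ) :
    principalCongruence ι ((p : R) ^ n) ≤ H ⊔ principalCongruence ι ((p : R) ^ m) := by
  have hsucc (i : ℕ) (hi : n ≤ i) : principalCongruence ι ((p : R) ^ i) ≤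
      H ⊔ principalCongruence ι ((p : R) ^ (i + 1)) := by
    induction i, hi using Nat.le_induction with
    | base => exact hH
    | succ i hi ih => exact principalCongruence_succ_le_sup hp hJ (by omega) (by omega) ih
  rcases le_total m n with hmn | hnm
  · exact (principalCongruence_le_of_dvd (pow_dvd_pow _ hmn)).trans le_sup_right
  · induction m, hnm using Nat.le_induction with
    | base => exact le_sup_right
    | succ m hm ih => exact ih.trans (sup_le le_sup_left (hsucc m hm))

end PrincipalCongruence

section Padic

variable {ι : Type*} [Fintype ι] [DecidableEq ι] {p : ℕ} [Fact p.Prime]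

/-- Entrywise reduction of invertible `p`-adic integer matrices modulo `p ^ n`. -/
noncomputable abbrev reduceModPow (n : ℕ) : GL ι ℤ_[p] →* GL ι (ZMod (p ^ n)) :=
  GeneralLinearGroup.map (PadicInt.toZModPow n)

lemma ker_reduceModPow (n : ℕ) :
    (reduceModPow n).ker = principalCongruence ι ((p : ℤ_[p]) ^ n) :=
  ker_map_eq_principalCongruence (PadicInt.ker_toZModPow n)

lemma reduceModPow_eq_of_le {m n : ℕ} (hmn : m ≤ n) {A B : GL ι ℤ_[p]}
    (h : reduceModPow n A = reduceModPow n B) : reduceModPow m A = reduceModPow m B := by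
  rw [MonoidHom.eq_iff, ker_reduceModPow] at h ⊢
  exact principalCongruence_le_of_dvd (pow_dvd_pow _ hmn) h

lemma mem_sup_principalCongruence_pow {H : Subgroup (GL ι ℤ_[p])} {n : ℕ} {A : GL ι ℤ_[p]} :
    A ∈ H ⊔ principalCongruence ι ((p : ℤ_[p]) ^ n) ↔
      ∃ B ∈ H, reduceModPow n B = reduceModPow n A := by
  rw [← ker_reduceModPow, ← Subgroup.comap_map_eq, Subgroup.mem_comap, Subgroup.mem_map]

lemma natCast_prime_mem_jacobson_padicInt : (p : ℤ_[p]) ∈ Ideal.jacobson (⊥ : Ideal ℤ_[p]) := by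
  rw [IsLocalRing.jacobson_eq_maximalIdeal ⊥ bot_ne_top, PadicInt.maximalIdeal_eq_span_p]
  exact Ideal.mem_span_singleton_self _

lemma isOpen_span_prime_pow (n : ℕ) : IsOpen (Ideal.span {(p : ℤ_[p]) ^ n} : Set ℤ_[p]) := by
  rw [← Ideal.span_singleton_pow, ← PadicInt.maximalIdeal_eq_span_p]
  exact IsLocalRing.isOpen_maximalIdeal_pow _ n

lemma tendsto_zero_of_prime_pow_dvd {x : ℕ → ℤ_[p]} (hx : ∀ k, (p : ℤ_[p]) ^ k ∣ x k) :
    Tendsto x atTop (𝓝 0) := by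
  refine squeeze_zero_norm (a := fun k => ((p : ℝ)⁻¹) ^ k) (fun k => ?_)
    (tendsto_pow_atTop_nhds_zero_of_lt_one (by positivity)
      (inv_lt_one_of_one_lt₀ (by exact_mod_cast (Fact.out : p.Prime).one_lt)))
  simpa using (PadicInt.norm_le_pow_iff_mem_span_pow _ _).mpr (Ideal.mem_span_singleton.mpr (hx k))

lemma coprime_card_GL_two {ℓ : ℕ} (hℓ : ℓ.Prime) (hne : p ≠ ℓ) (hsq : (p : ZMod ℓ) ^ 2 ≠ 1) :
    (Nat.card (GL (Fin 2) (ZMod p))).Coprime ℓ := by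
  have hp : p.Prime := Fact.out
  have hcard : Nat.card (GL (Fin 2) (ZMod p)) = (p ^ 2 - 1) * (p * (p - 1)) := by
    rw [card_GL_field, ZMod.card, Fin.prod_univ_two, Nat.mul_sub p, ← sq]
    simp
  have hsq_sub : ¬ ℓ ∣ p ^ 2 - 1 := by
    rw [← ZMod.natCast_eq_zero_iff, Nat.cast_sub (Nat.one_le_pow _ _ hp.pos)]
    simpa [sub_eq_zero] using hsq
  have hsub : ¬ ℓ ∣ p - 1 := fun h =>
    hsq_sub (h.trans (by simpa using Nat.sub_dvd_pow_sub_pow p 1 2))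
  rw [hcard, Nat.coprime_comm, hℓ.coprime_iff_not_dvd, hℓ.dvd_mul, hℓ.dvd_mul,
    Nat.prime_dvd_prime_iff_eq hℓ hp]
  tauto

lemma exists_coprime_pow_mem_principalCongruence {ℓ : ℕ} (hℓ : ℓ.Prime) (hne : p ≠ ℓ)
    {A : GL (Fin 2) ℤ_[p]}
    (hA : (p : ZMod ℓ) ^ 2 = 1 → A ∈ principalCongruence (Fin 2) (p : ℤ_[p])) :
    ∃ m : ℕ, m.Coprime ℓ ∧ A ^ m ∈ principalCongruence (Fin 2) (p : ℤ_[p]) := by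
  by_cases hsq : (p : ZMod ℓ) ^ 2 = 1
  · exact ⟨1, Nat.coprime_one_left ℓ, by simpa using hA hsq⟩
  · refine ⟨_, coprime_card_GL_two hℓ hne hsq, ?_⟩
    rw [← ker_map_eq_principalCongruence (f := PadicInt.toZMod)
      (PadicInt.ker_toZMod.trans PadicInt.maximalIdeal_eq_span_p), MonoidHom.mem_ker, map_pow]
    exact pow_card_eq_one'

-- The kernel of `GL₂(ℤ/pᵏ) → GL₂(𝔽_p)` is a `p`-group, so only `|GL₂(𝔽_p)| = p (p² - 1) (p - 1)`
-- can contribute a factor `ℓ`.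
lemma coprime_orderOf_reduceModPow {ℓ : ℕ} (hℓ : ℓ.Prime) (hne : p ≠ ℓ) {A : GL (Fin 2) ℤ_[p]}
    (hA : (p : ZMod ℓ) ^ 2 = 1 → A ∈ principalCongruence (Fin 2) (p : ℤ_[p])) (k : ℕ) :
    (orderOf (reduceModPow k A)).Coprime ℓ := by
  obtain ⟨m, hm, hAm⟩ := exists_coprime_pow_mem_principalCongruence hℓ hne hA
  have hpk : (p ^ k).Coprime ℓ := ((Nat.coprime_primes Fact.out hℓ).mpr hne).pow_left k
  refine (hm.mul_left hpk).coprime_dvd_left (orderOf_dvd_of_pow_eq_one ?_)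
  rw [← map_pow, ← MonoidHom.mem_ker, ker_reduceModPow, pow_mul]
  exact principalCongruence_le_of_dvd (pow_dvd_pow _ k.le_succ)
    (pow_pow_mem_principalCongruence hAm k)

end Padic

section Nell

lemma Nell_ne_zero {N ℓ : ℕ} (hℓ : ℓ ≠ 0) : Nell N ℓ ≠ 0 :=
  mul_ne_zero (pow_ne_zero _ hℓ) <| Finset.prod_ne_zero_iff.mpr fun _ hp =>
    (Nat.prime_of_mem_primeFactors (Finset.mem_filter.mp hp).1).ne_zero

lemma factorization_Nell_self {N ℓ : ℕ} (hℓ : ℓ.Prime) :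
    (Nell N ℓ).factorization ℓ = N.factorization ℓ := by
  have : Fact ℓ.Prime := ⟨hℓ⟩
  have hndvd : ¬ ℓ ∣ ∏ p ∈ N.primeFactors.filter (fun p : ℕ => (p : ZMod ℓ) ^ 2 = 1), p := by
    rw [hℓ.prime.dvd_finsetProd_iff]
    rintro ⟨p, hp, hdvd⟩
    have hsq : (p : ZMod ℓ) ^ 2 = 1 := (Finset.mem_filter.mp hp).2
    simp [(ZMod.natCast_eq_zero_iff p ℓ).mpr hdvd] at hsq
  rw [Nell, Nat.factorization_mul (pow_ne_zero _ hℓ.ne_zero) (right_ne_zero_of_mul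
    (Nell_ne_zero (N := N) hℓ.ne_zero)), Finsupp.add_apply, hℓ.factorization_pow,
    Finsupp.single_eq_same, Nat.factorization_eq_zero_of_not_dvd hndvd, add_zero]

lemma dvd_Nell {N ℓ p : ℕ} (hp : p ∈ N.primeFactors) (hsq : (p : ZMod ℓ) ^ 2 = 1) :
    p ∣ Nell N ℓ :=
  (Finset.dvd_prod_of_mem _ (Finset.mem_filter.mpr ⟨hp, hsq⟩)).mul_left _

end Nell

section Components

/-- The index type of the product `ZN N`. -/
abbrev PrimeDivisor (N : ℕ) : Type := {q : ℕ // q.Prime ∧ q ∣ N}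

instance (N : ℕ) [NeZero N] : Finite (PrimeDivisor N) :=
  ((Set.finite_le_nat N).subset fun _ hq => Nat.le_of_dvd (NeZero.pos N) hq.2).to_subtype

lemma PrimeDivisor.mem_primeFactors {N : ℕ} [NeZero N] (q : PrimeDivisor N) :
    q.1 ∈ N.primeFactors :=
  Nat.mem_primeFactors.mpr ⟨q.2.1, q.2.2, NeZero.ne N⟩

lemma PrimeDivisor.factorization_ne_zero {N : ℕ} [NeZero N] (q : PrimeDivisor N) :
    N.factorization q.1 ≠ 0 :=
  (q.2.1.factorization_pos_of_dvd (NeZero.ne N) q.2.2).ne'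

variable {N : ℕ}

/-- The projection of `GL₂(ℤ_N) = ∏_{p ∣ N} GL₂(ℤ_p)` onto the factor at `p`. -/
noncomputable def component (p : PrimeDivisor N) : GL (Fin 2) (ZN N) →* GL (Fin 2) ℤ_[p.1] :=
  GeneralLinearGroup.map (Pi.evalRingHom (fun q : PrimeDivisor N => ℤ_[q.1]) p)

lemma coe_component_apply (p : PrimeDivisor N) (A : GL (Fin 2) (ZN N)) (i j : Fin 2) :
    (component p A : Matrix (Fin 2) (Fin 2) ℤ_[p.1]) i j =
      (A : Matrix (Fin 2) (Fin 2) (ZN N)) i j p :=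
  rfl

lemma continuous_component (p : PrimeDivisor N) : Continuous (component p) :=
  Continuous.units_map _ (continuous_id.matrix_map (continuous_apply p))

lemma exists_component_eq (X : ∀ p : PrimeDivisor N, GL (Fin 2) ℤ_[p.1]) :
    ∃ A : GL (Fin 2) (ZN N), ∀ p, component p A = X p := by
  let glue (M : ∀ p : PrimeDivisor N, Matrix (Fin 2) (Fin 2) ℤ_[p.1]) :
      Matrix (Fin 2) (Fin 2) (ZN N) := of fun i j p => M p i j
  have glue_mul_glue {L M : ∀ p : PrimeDivisor N, Matrix (Fin 2) (Fin 2) ℤ_[p.1]}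
      (h : ∀ p, L p * M p = 1) : glue L * glue M = 1 := by
    ext i j p
    have hentry := congrFun₂ (h p) i j
    fin_cases i <;> fin_cases j <;> simpa [glue, mul_apply] using hentry
  exact ⟨⟨glue fun p => X p, glue fun p => ((X p)⁻¹ : GL (Fin 2) ℤ_[p.1]),
    glue_mul_glue fun p => (X p).mul_inv, glue_mul_glue fun p => (X p).inv_mul⟩, fun p => rfl⟩

lemma congrMod_iff {m : ℕ} {A B : GL (Fin 2) (ZN N)} :
    CongrMod N m A B ↔ ∀ p : PrimeDivisor N,
      reduceModPow (m.factorization p.1) (component p A) =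
        reduceModPow (m.factorization p.1) (component p B) :=
  Iff.rfl

lemma reduceModPow_component_eq_of_congrMod {m : ℕ} {A B : GL (Fin 2) (ZN N)}
    (h : CongrMod N m A B) (hm : m ≠ 0) {p : PrimeDivisor N} {n : ℕ} (hdvd : p.1 ^ n ∣ m) :
    reduceModPow n (component p A) = reduceModPow n (component p B) :=
  reduceModPow_eq_of_le ((p.2.1.pow_dvd_iff_le_factorization hm).mp hdvd) (congrMod_iff.mp h p)

variable (N) in
/-- The principal congruence subgroup of `GL₂(ℤ_N)` of level `m`. -/
noncomputable def congruenceSubgroup (m : ℕ) : Subgroup (GL (Fin 2) (ZN N)) :=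
  ⨅ p : PrimeDivisor N,
    (principalCongruence (Fin 2) ((p.1 : ℤ_[p.1]) ^ m.factorization p.1)).comap (component p)

lemma mem_congruenceSubgroup {m : ℕ} {A : GL (Fin 2) (ZN N)} :
    A ∈ congruenceSubgroup N m ↔ CongrMod N m A 1 := by
  simp only [congruenceSubgroup, Subgroup.mem_iInf, Subgroup.mem_comap, ← ker_reduceModPow,
    MonoidHom.mem_ker, congrMod_iff, map_one]

lemma isOpen_congruenceSubgroup [NeZero N] (m : ℕ) :
    IsOpen (congruenceSubgroup N m : Set (GL (Fin 2) (ZN N))) := by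
  rw [congruenceSubgroup, Subgroup.coe_iInf]
  exact isOpen_iInter_of_finite fun p =>
    (isOpen_principalCongruence (isOpen_span_prime_pow _)).preimage (continuous_component p)

/-- The matrices congruent to `1` modulo `q ^ k` at every prime `q ∣ N` other than `l`. -/
noncomputable def congruenceSubgroupAway (l : PrimeDivisor N) (k : ℕ) :
    Subgroup (GL (Fin 2) (ZN N)) :=
  ⨅ q : {q : PrimeDivisor N // q ≠ l},
    (principalCongruence (Fin 2) ((q.1.1 : ℤ_[q.1.1]) ^ k)).comap (component q.1)

lemma mem_congruenceSubgroupAway {l : PrimeDivisor N} {k : ℕ} {A : GL (Fin 2) (ZN N)} :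
    A ∈ congruenceSubgroupAway l k ↔ ∀ q ≠ l, reduceModPow k (component q A) = 1 := by
  simp only [congruenceSubgroupAway, Subgroup.mem_iInf, Subgroup.mem_comap, ← ker_reduceModPow,
    MonoidHom.mem_ker, Subtype.forall]

end Components

section Approximation

variable {N : ℕ}

lemma tendsto_units_iff {M α : Type*} [Monoid M] [TopologicalSpace M] {f : α → Mˣ} {l : Filter α}
    {a : Mˣ} :
    Tendsto f l (𝓝 a) ↔ Tendsto (fun x => (f x : M)) l (𝓝 ↑a) ∧
      Tendsto (fun x => (↑(f x)⁻¹ : M)) l (𝓝 ↑a⁻¹) := by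
  rw [Units.isInducing_embedProduct.tendsto_nhds_iff, Prod.tendsto_iff]
  exact and_congr_right' (MulOpposite.opHomeomorph.isInducing.tendsto_nhds_iff
    (f := fun x => (↑(f x)⁻¹ : M))).symm

lemma tendsto_coe_one_of_component_mem {A : ℕ → GL (Fin 2) (ZN N)}
    (hA : ∀ k p, component p (A k) ∈ principalCongruence (Fin 2) ((p.1 : ℤ_[p.1]) ^ k)) :
    Tendsto (fun k => (A k : Matrix (Fin 2) (Fin 2) (ZN N))) atTop (𝓝 1) := by
  refine tendsto_pi_nhds.mpr fun i => tendsto_pi_nhds.mpr fun j => tendsto_pi_nhds.mpr fun p => ?_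
  rw [← tendsto_sub_nhds_zero_iff]
  refine tendsto_zero_of_prime_pow_dvd fun k => ?_
  obtain ⟨E, hE⟩ := mem_principalCongruence.mp (hA k p)
  refine ⟨E i j, ?_⟩
  rw [← coe_component_apply, hE]
  fin_cases i <;> fin_cases j <;> simp

lemma mem_of_forall_exists_reduceModPow_eq {G : Subgroup (GL (Fin 2) (ZN N))}
    (hG : IsClosed (G : Set (GL (Fin 2) (ZN N)))) {A : GL (Fin 2) (ZN N)}
    (hA : ∀ k, ∃ B ∈ G, ∀ p, reduceModPow k (component p B) = reduceModPow k (component p A)) :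
    A ∈ G := by
  choose B hBG hB using hA
  have hmem (k : ℕ) (p : PrimeDivisor N) :
      component p (A⁻¹ * B k) ∈ principalCongruence (Fin 2) ((p.1 : ℤ_[p.1]) ^ k) := by
    rw [map_mul, map_inv, ← ker_reduceModPow, ← MonoidHom.eq_iff, hB]
  have hone : Tendsto (fun k => A⁻¹ * B k) atTop (𝓝 1) :=
    tendsto_units_iff.mpr ⟨tendsto_coe_one_of_component_mem hmem, by
      simpa using tendsto_coe_one_of_component_mem (A := fun k => (A⁻¹ * B k)⁻¹)
        fun k p => by rw [map_inv]; exact inv_mem (hmem k p)⟩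
  have hlim : Tendsto B atTop (𝓝 A) := by
    simpa using hone.const_mul A
  exact hG.mem_of_tendsto hlim (Eventually.of_forall hBG)

variable [NeZero N]

lemma exists_coprime_pow_mem_congruenceSubgroupAway {l : PrimeDivisor N} {A : GL (Fin 2) (ZN N)}
    (hA : ∀ q ≠ l, (q.1 : ZMod l.1) ^ 2 = 1 → reduceModPow 1 (component q A) = 1) (k : ℕ) :
    ∃ m : ℕ, m.Coprime l.1 ∧ A ^ m ∈ congruenceSubgroupAway l k := by
  classical
  have := Fintype.ofFinite (PrimeDivisor N)
  refine ⟨∏ q ∈ Finset.univ.erase l, orderOf (reduceModPow k (component q A)),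
    Nat.Coprime.prod_left fun q hq => ?_, mem_congruenceSubgroupAway.mpr fun q hq => ?_⟩
  · have hql : q ≠ l := Finset.ne_of_mem_erase hq
    refine coprime_orderOf_reduceModPow l.2.1 (Subtype.coe_ne_coe.mpr hql) (fun hsq => ?_) k
    rw [← pow_one (q.1 : ℤ_[q.1]), ← ker_reduceModPow]
    exact hA q hql hsq
  · rw [map_pow, map_pow, ← orderOf_dvd_iff_pow_eq_one]
    exact Finset.dvd_prod_of_mem _ (Finset.mem_erase.mpr ⟨hq, Finset.mem_univ q⟩)

lemma exists_mem_reduceModPow_component_eq {G : Subgroup (GL (Fin 2) (ZN N))} {l : PrimeDivisor N}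
    (hG : ∀ A, CongrMod N (Nell N l.1) A 1 → ∃ g ∈ G, CongrMod N (Nell N l.1 * l.1) g A)
    {X : GL (Fin 2) ℤ_[l.1]}
    (hX : X ∈ principalCongruence (Fin 2) ((l.1 : ℤ_[l.1]) ^ N.factorization l.1)) :
    ∃ g ∈ G,
      reduceModPow (N.factorization l.1 + 1) (component l g) =
        reduceModPow (N.factorization l.1 + 1) X ∧
      ∀ q ≠ l, (q.1 : ZMod l.1) ^ 2 = 1 → reduceModPow 1 (component q g) = 1 := by
  have hℓ : l.1.Prime := l.2.1
  have hM : Nell N l.1 * l.1 ≠ 0 := mul_ne_zero (Nell_ne_zero hℓ.ne_zero) hℓ.ne_zero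
  obtain ⟨A, hA⟩ := exists_component_eq (Pi.mulSingle l X)
  have hAl : component l A = X := by rw [hA, Pi.mulSingle_eq_same]
  have hAq (q : PrimeDivisor N) (hq : q ≠ l) : component q A = 1 := by
    rw [hA, Pi.mulSingle_eq_of_ne hq]
  have hA_one : CongrMod N (Nell N l.1) A 1 := by
    refine congrMod_iff.mpr fun q => ?_
    rcases eq_or_ne q l with rfl | hq
    · rwa [map_one, map_one, hAl, ← MonoidHom.mem_ker, ker_reduceModPow,
        factorization_Nell_self hℓ]
    · rw [hAq q hq, map_one (component q)]
  obtain ⟨g, hg, hgA⟩ := hG A hA_one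
  refine ⟨g, hg, ?_, fun q hq hsq => ?_⟩
  · rw [← hAl]
    exact reduceModPow_component_eq_of_congrMod hgA hM
      (pow_succ l.1 _ ▸ mul_dvd_mul_right (dvd_mul_right _ _) _)
  · have hdvd : q.1 ^ 1 ∣ Nell N l.1 * l.1 := by
      rw [pow_one]
      exact (dvd_Nell q.mem_primeFactors hsq).mul_right _
    rw [reduceModPow_component_eq_of_congrMod hgA hM hdvd, hAq q hq, map_one]

lemma principalCongruence_le_map_component_sup {G : Subgroup (GL (Fin 2) (ZN N))}
    {l : PrimeDivisor N}
    (hG : ∀ A, CongrMod N (Nell N l.1) A 1 → ∃ g ∈ G, CongrMod N (Nell N l.1 * l.1) g A) (k : ℕ) :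
    principalCongruence (Fin 2) ((l.1 : ℤ_[l.1]) ^ N.factorization l.1) ≤
      (G ⊓ congruenceSubgroupAway l k).map (component l) ⊔
        principalCongruence (Fin 2) ((l.1 : ℤ_[l.1]) ^ (N.factorization l.1 + 1)) := by
  intro X hX
  obtain ⟨g, hg, hg_l, hg_q⟩ := exists_mem_reduceModPow_component_eq hG hX
  have hX_pow : reduceModPow (N.factorization l.1 + 1) X ^ l.1 = 1 := by
    rw [← map_pow, ← MonoidHom.mem_ker, ker_reduceModPow, pow_succ']
    exact pow_natCast_mem_principalCongruence (dvd_pow_self _ l.factorization_ne_zero) hX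
  obtain ⟨m, hm, hgm⟩ := exists_coprime_pow_mem_congruenceSubgroupAway hg_q k
  obtain ⟨c, -, hc⟩ := Nat.exists_mul_mod_eq_one_of_coprime hm l.2.1.one_lt
  refine mem_sup_principalCongruence_pow.mpr ⟨component l (g ^ (m * c)), ?_, ?_⟩
  · exact ⟨_, ⟨pow_mem hg _, pow_mul g m c ▸ pow_mem hgm c⟩, rfl⟩
  · rw [map_pow, map_pow, hg_l, pow_eq_pow_mod _ hX_pow, hc, pow_one]

lemma exists_mem_forall_reduceModPow_component_eq {G : Subgroup (GL (Fin 2) (ZN N))}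
    {A : GL (Fin 2) (ZN N)} {k : ℕ}
    (hA : ∀ l, component l A ∈ (G ⊓ congruenceSubgroupAway l k).map (component l) ⊔
      principalCongruence (Fin 2) ((l.1 : ℤ_[l.1]) ^ k)) :
    ∃ B ∈ G, ∀ p, reduceModPow k (component p B) = reduceModPow k (component p A) := by
  classical
  let reduceAll : GL (Fin 2) (ZN N) →* ∀ p : PrimeDivisor N, GL (Fin 2) (ZMod (p.1 ^ k)) :=
    MonoidHom.pi fun p => (reduceModPow k).comp (component p)
  suffices h : reduceAll A ∈ G.map reduceAll by
    obtain ⟨B, hB, hBA⟩ := h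
    exact ⟨B, hB, fun p => congrFun hBA p⟩
  refine Subgroup.pi_mem_of_mulSingle_mem _ fun l => ?_
  obtain ⟨_, ⟨B, hB, rfl⟩, hBA⟩ := mem_sup_principalCongruence_pow.mp (hA l)
  refine ⟨B, hB.1, funext fun q => ?_⟩
  rcases eq_or_ne q l with rfl | hq
  · rw [Pi.mulSingle_eq_same]
    exact hBA
  · rw [Pi.mulSingle_eq_of_ne hq]
    exact mem_congruenceSubgroupAway.mp hB.2 q hq

end Approximation

/-- Let `G` be a closed subgroup of `GL₂(ℤ_N)`, where `N = ∏_p p^{e_p} > 1`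
with `e₂ ≠ 1`. For each prime `ℓ ∣ N`, set `N_ℓ = ℓ^{e_ℓ} ∏_{p ∣ N, p² ≡ 1 mod ℓ} p`.
Suppose for each prime `ℓ ∣ N` the image of `G` in `GL₂(ℤ/N_ℓℓℤ)` contains all matrices
congruent to `I` modulo `N_ℓ` (equivalently: every `A ∈ GL₂(ℤ_N)` with `A ≡ I (mod N_ℓ)` is
congruent modulo `N_ℓℓ` to an element of `G`). Then `G` is an open subgroup of `GL₂(ℤ_N)` of
level dividing `N` (in particular `G` contains every matrix congruent to `I` modulo `N`). -/
theorem openness_criterion_GL2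
    (N : ℕ) (hN : 1 < N) (h2 : N.factorization 2 ≠ 1)
    (G : Subgroup (GL (Fin 2) (ZN N)))
    (hclosed : IsClosed (G : Set (GL (Fin 2) (ZN N))))
    (hcond : ∀ ℓ ∈ N.primeFactors, ∀ A : GL (Fin 2) (ZN N),
      CongrMod N (Nell N ℓ) A 1 → ∃ g ∈ G, CongrMod N (Nell N ℓ * ℓ) g A) :
    IsOpen (G : Set (GL (Fin 2) (ZN N))) ∧
      ∀ A : GL (Fin 2) (ZN N), CongrMod N N A 1 → A ∈ G := by
  have : NeZero N := ⟨by omega⟩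
  have hmem (A : GL (Fin 2) (ZN N)) (hA : A ∈ congruenceSubgroup N N) : A ∈ G := by
    refine mem_of_forall_exists_reduceModPow_eq hclosed fun k =>
      exists_mem_forall_reduceModPow_component_eq fun l => ?_
    have hbase := principalCongruence_le_map_component_sup (hcond l.1 l.mem_primeFactors) k
    exact principalCongruence_pow_le_sup l.2.1 natCast_prime_mem_jacobson_padicInt
      l.factorization_ne_zero (fun hl => hl ▸ h2) hbase k (Subgroup.mem_iInf.mp hA l)
  exact ⟨Subgroup.isOpen_mono hmem (isOpen_congruenceSubgroup N),
    fun A hA => hmem A (mem_congruenceSubgroup.mpr hA)⟩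
end
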